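/- Let f be a pluriharmonic function on the unit polydisc 𝔹_{ℓ_∞ⁿ} with sup_{z ∈ 𝔹_{ℓ_∞ⁿ}} Re(f(z)) ≤ 1. Then for every z ∈ 𝔹_{ℓ_∞ⁿ} and every nonzero multi-index m = (m₁,…,m_n), | ∂^{|m|} f(z)/∂z₁^{m₁}⋯∂z_n^{m_n} + conj( ∂^{|m|} f(z)/∂z̄₁^{m₁}⋯∂z̄_n^{m_n} ) | ≤ 2 m! (1 − Re(f(z))) (1 + ‖z‖_∞)^{|m|−N} / (1 − ‖z‖_∞²)^{|m|}, where N is the number of indices j with m_j ≠ 0. -/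

import Mathlib

open scoped BigOperators

/-- The Wirtinger partial derivative `∂/∂z_k` of a holomorphic function on a
domain in `ℂ^n` with the sup norm (so `Metric.ball 0 1` is the polydisc). -/
noncomputable def wpd {n : ℕ} (k : Fin n) (h : (Fin n → ℂ) → ℂ) : (Fin n → ℂ) → ℂ :=
  fun z => fderiv ℂ h z (Pi.single k 1)

/-- The iterated Wirtinger derivative `∂^{|m|}/∂z₁^{m₁}⋯∂z_n^{m_n}`. -/
noncomputable def wpdMulti {n : ℕ} (m : Fin n → ℕ) (h : (Fin n → ℂ) → ℂ) :
    (Fin n → ℂ) → ℂ :=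
  Fin.foldr n (fun k F => (wpd k)^[m k] F) h

/-
The function `F = h + g` is holomorphic with real part `Re f`, so it suffices to bound `D^m F` when
`Re F ≤ 1`. In one variable, an antiholomorphic function averages to zero on circles against the
Cauchy kernel of order `b ≥ 1`, and the modulus of that kernel is at most a constant times the
Poisson kernel. Hence, if the real part of a holomorphic `Q` dominates `|H + conj K|`, then a
constant multiple of `Re Q z` dominates the `b`-th derivative of `H` at `z`. With `H = F`,
`K = F - 2` and `Q = 2 (1 - F)` this handles one coordinate with `m_j ≠ 0`. The resulting bound is
again the real part of a holomorphic function of each remaining coordinate, so the estimate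
iterates, with `K = 0`. The kernel of order `b` exceeds the Poisson kernel by only `b - 1` powers of
`1 / |ζ - z|`, so every coordinate with `m_j ≠ 0` saves one factor `1 + |z_j|`; this is where `N`
comes from.
-/

section HolomorphicFDeriv

open Metric Real Filter Topology MeasureTheory

variable {E F : Type*} [NormedAddCommGroup E] [NormedSpace ℂ E]
  [NormedAddCommGroup F] [NormedSpace ℂ F] {f : E → F} {x v : E} {r ρ C : ℝ}

theorem eventually_norm_fderiv_le (hf : ∀ᶠ y in 𝓝 x, DifferentiableAt ℂ f y) :
    ∃ C, ∀ᶠ y in 𝓝 x, ‖fderiv ℂ f y‖ ≤ C := by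
  have hclose : ∀ᶠ y in 𝓝 x, dist (f y) (f x) < 1 :=
    hf.self_of_nhds.continuousAt.eventually (ball_mem_nhds _ one_pos)
  obtain ⟨r, hr, hball⟩ := eventually_nhds_iff_ball.1 (hf.and hclose)
  refine ⟨2 / (r / 2), ?_⟩
  filter_upwards [ball_mem_nhds x (half_pos hr)] with y hy
  have hsub : ball y (r / 2) ⊆ ball x r :=
    ball_subset_ball' (by linarith [mem_ball.1 hy])
  refine Complex.norm_fderiv_le_div_of_mapsTo_ball
    (fun w hw => (hball w (hsub hw)).1.differentiableWithinAt) (fun w hw => ?_) (half_pos hr)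
  have hw1 := (hball w (hsub hw)).2
  have hy1 := (hball y (hsub (mem_ball_self (half_pos hr)))).2
  exact mem_closedBall.2 (by linarith [dist_triangle_right (f w) (f y) (f x)])

theorem norm_fderiv_sub_fderiv_le (hf : ∀ y ∈ ball x (2 * r), DifferentiableAt ℂ f y)
    (hC : ∀ y ∈ ball x (2 * r), ‖fderiv ℂ f y‖ ≤ C) {y : E} (hy : y ∈ ball x r) :
    ‖fderiv ℂ f y - fderiv ℂ f x‖ ≤ 2 * (C * ‖y - x‖) / r := by
  have hr : 0 < r := pos_of_mem_ball hy
  have hmem : ∀ u ∈ ball x r, u ∈ ball x (2 * r) ∧ u + (y - x) ∈ ball x (2 * r) := fun u hu => by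
    rw [mem_ball_iff_norm] at hu hy
    have hnorm : ‖u + (y - x) - x‖ ≤ ‖u - x‖ + ‖y - x‖ := by
      rw [add_sub_right_comm]; exact norm_add_le _ _
    constructor <;> rw [mem_ball_iff_norm] <;> linarith
  have hd : ∀ u ∈ ball x r, HasFDerivAt (fun u => f (u + (y - x)) - f u)
      (fderiv ℂ f (u + (y - x)) - fderiv ℂ f u) u := fun u hu =>
    ((hasFDerivAt_comp_add_right _).2 (hf _ (hmem u hu).2).hasFDerivAt).sub
      (hf _ (hmem u hu).1).hasFDerivAt
  have hlip : ∀ u ∈ ball x r, ‖f (u + (y - x)) - f u‖ ≤ C * ‖y - x‖ := fun u hu => by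
    simpa using (convex_ball x (2 * r)).norm_image_sub_le_of_norm_fderiv_le hf hC
      (hmem u hu).1 (hmem u hu).2
  have hx := mem_ball_self (x := x) hr
  have hderiv := (hd x hx).fderiv
  rw [add_sub_cancel] at hderiv
  rw [← hderiv]
  refine Complex.norm_fderiv_le_div_of_mapsTo_ball
    (fun u hu => (hd u hu).differentiableAt.differentiableWithinAt) (fun u hu => ?_) hr
  rw [mem_closedBall, dist_eq_norm, two_mul]
  exact (norm_sub_le _ _).trans (add_le_add (hlip u hu) (hlip x hx))

theorem continuousAt_fderiv (hf : ∀ᶠ y in 𝓝 x, DifferentiableAt ℂ f y) :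
    ContinuousAt (fderiv ℂ f) x := by
  obtain ⟨C, hC⟩ := eventually_norm_fderiv_le hf
  obtain ⟨r, hr, hball⟩ := eventually_nhds_iff_ball.1 (hf.and hC)
  rw [← mul_div_cancel₀ r two_ne_zero] at hball
  have hlim : Tendsto (fun y => 2 * (C * ‖y - x‖) / (r / 2)) (𝓝 x) (𝓝 0) :=
    Continuous.tendsto' (by fun_prop) _ _ (by simp)
  refine tendsto_iff_norm_sub_tendsto_zero.2
    (squeeze_zero' (.of_forall fun _ => norm_nonneg _) ?_ hlim)
  filter_upwards [ball_mem_nhds x (half_pos hr)] with y hy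
  exact norm_fderiv_sub_fderiv_le (fun w hw => (hball w hw).1)
    (fun w hw => (hball w hw).2) hy

theorem add_smul_mem_ball {y : E} {s : ℂ} (hy : y ∈ ball x (r - ‖v‖ * ρ))
    (hs : s ∈ closedBall (0 : ℂ) ρ) : y + s • v ∈ ball x r := by
  rw [mem_ball_iff_norm] at hy ⊢
  have hsv : ‖s • v‖ ≤ ‖v‖ * ρ := by
    rw [norm_smul, mul_comm]
    gcongr
    exact mem_closedBall_zero_iff.1 hs
  rw [add_sub_right_comm]
  linarith [norm_add_le (y - x) (s • v)]

theorem fderiv_apply_eq_circleAverage [CompleteSpace F] (hρ : 0 < ρ)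
    (hf : ∀ s ∈ closedBall (0 : ℂ) ρ, DifferentiableAt ℂ f (x + s • v)) :
    fderiv ℂ f x v = circleAverage (fun ζ => ζ⁻¹ • f (x + ζ • v)) 0 ρ := by
  have hline : ∀ s ∈ closedBall (0 : ℂ) ρ,
      HasDerivAt (fun s : ℂ => f (x + s • v)) (fderiv ℂ f (x + s • v) v) s := fun s hs => by
    have hv : HasDerivAt (fun s : ℂ => x + s • v) v s := by
      simpa using ((hasDerivAt_id s).smul_const v).const_add x
    exact (hf s hs).hasFDerivAt.comp_hasDerivAt s hv
  have hcauchy := DifferentiableOn.deriv_eq_smul_circleIntegral hρ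
    fun s hs => (hline s hs).differentiableAt.differentiableWithinAt
  rw [(hline 0 (mem_closedBall_self hρ.le)).deriv, zero_smul, add_zero] at hcauchy
  rw [circleAverage_eq_circleIntegral hρ.ne', ← inv_smul_smul₀ Complex.two_pi_I_ne_zero
    (fderiv ℂ f x v), ← hcauchy]
  simp only [sub_zero, smul_smul, one_div, sq, mul_inv]

theorem differentiableAt_circleAverage_add_smul {φ : ℂ → ℂ} (hφ : ContinuousOn φ (sphere 0 ρ))
    (hρ : 0 ≤ ρ) (hρr : ‖v‖ * ρ < r) (hf : ∀ y ∈ ball x r, DifferentiableAt ℂ f y)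
    (hC : ∀ y ∈ ball x r, ‖fderiv ℂ f y‖ ≤ C) :
    DifferentiableAt ℂ (fun y => circleAverage (fun ζ => φ ζ • f (y + ζ • v)) 0 ρ) x := by
  have hmem : ∀ y ∈ ball x (r - ‖v‖ * ρ), ∀ θ, y + circleMap 0 ρ θ • v ∈ ball x r :=
    fun y hy θ => add_smul_mem_ball hy (sphere_subset_closedBall (circleMap_mem_sphere 0 hρ θ))
  have hφc : Continuous fun θ => φ (circleMap 0 ρ θ) :=
    hφ.comp_continuous (continuous_circleMap 0 ρ) (circleMap_mem_sphere 0 hρ)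
  have hfc : ContinuousOn f (ball x r) := fun y hy => (hf y hy).continuousAt.continuousWithinAt
  have hdc : ContinuousOn (fderiv ℂ f) (ball x r) := fun y hy =>
    (continuousAt_fderiv (eventually_of_mem (isOpen_ball.mem_nhds hy) hf)).continuousWithinAt
  have hcont : ∀ y ∈ ball x (r - ‖v‖ * ρ),
      Continuous fun θ => φ (circleMap 0 ρ θ) • f (y + circleMap 0 ρ θ • v) := fun y hy =>
    hφc.smul (hfc.comp_continuous (by fun_prop) (hmem y hy))
  have hpos : 0 < r - ‖v‖ * ρ := sub_pos.2 hρr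
  have hx := mem_ball_self (x := x) hpos
  have hint := intervalIntegral.hasFDerivAt_integral_of_dominated_of_fderiv_le (𝕜 := ℂ)
    (μ := volume) (a := 0) (b := 2 * π) (bound := fun θ => ‖φ (circleMap 0 ρ θ)‖ * C)
    (F := fun y θ => φ (circleMap 0 ρ θ) • f (y + circleMap 0 ρ θ • v))
    (F' := fun y θ => φ (circleMap 0 ρ θ) • fderiv ℂ f (y + circleMap 0 ρ θ • v))
    (ball_mem_nhds x hpos)
    (eventually_of_mem (ball_mem_nhds x hpos) fun y hy => (hcont y hy).aestronglyMeasurable)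
    ((hcont x hx).intervalIntegrable _ _)
    (hφc.smul (hdc.comp_continuous (by fun_prop) (hmem x hx))).aestronglyMeasurable
    (.of_forall fun θ _ y hy => by
      rw [norm_smul]
      exact mul_le_mul_of_nonneg_left (hC _ (hmem y hy θ)) (norm_nonneg _))
    ((hφc.norm.mul continuous_const).intervalIntegrable _ _)
    (.of_forall fun θ _ y hy =>
      ((hasFDerivAt_comp_add_right _).2 (hf _ (hmem y hy θ)).hasFDerivAt).const_smul _)
  exact hint.differentiableAt.const_smul ((2 * π)⁻¹ : ℝ)

theorem differentiableAt_fderiv_apply [CompleteSpace F]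
    (hf : ∀ᶠ y in 𝓝 x, DifferentiableAt ℂ f y) (v : E) :
    DifferentiableAt ℂ (fun y => fderiv ℂ f y v) x := by
  obtain ⟨C, hC⟩ := eventually_norm_fderiv_le hf
  obtain ⟨r, hr, hball⟩ := eventually_nhds_iff_ball.1 (hf.and hC)
  obtain ⟨ρ, hρ, hρr⟩ := exists_pos_mul_lt hr ‖v‖
  have hφ : ContinuousOn (fun ζ : ℂ => ζ⁻¹) (sphere 0 ρ) :=
    continuousOn_inv₀.mono fun ζ hζ => ne_of_mem_sphere hζ hρ.ne'
  refine (differentiableAt_circleAverage_add_smul hφ hρ.le hρr (fun y hy => (hball y hy).1)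
    fun y hy => (hball y hy).2).congr_of_eventuallyEq ?_
  filter_upwards [ball_mem_nhds x (sub_pos.2 hρr)] with y hy
  exact fderiv_apply_eq_circleAverage hρ fun s hs => (hball _ (add_smul_mem_ball hy hs)).1

end HolomorphicFDeriv

section CauchyKernel

open Metric Real ComplexConjugate

variable {F : Type*} [NormedAddCommGroup F] [NormedSpace ℂ F] {c z ζ : ℂ} {R : ℝ} {b : ℕ}

theorem norm_circleAverage_le_circleAverage_norm (f : ℂ → F) :
    ‖circleAverage f c R‖ ≤ circleAverage (fun ζ => ‖f ζ‖) c R := by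
  rw [circleAverage, circleAverage, norm_smul, Real.norm_of_nonneg (by positivity), smul_eq_mul]
  gcongr
  exact intervalIntegral.norm_integral_le_integral_norm two_pi_pos.le

theorem circleAverage_sub_smul_eq_zero_of_hasDerivAt [CompleteSpace F] {G G' : ℂ → F}
    (hR : 0 < R) (hG : ∀ ζ ∈ sphere c R, HasDerivAt G (G' ζ) ζ) :
    circleAverage (fun ζ => (ζ - c) • G' ζ) c R = 0 := by
  have hcongr : ∀ ζ ∈ sphere c R, (ζ - c)⁻¹ • (ζ - c) • G' ζ = G' ζ := fun ζ hζ =>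
    inv_smul_smul₀ (sub_ne_zero.2 (ne_of_mem_sphere hζ hR.ne')) _
  rw [circleAverage_eq_circleIntegral hR.ne', circleIntegral.integral_congr hR.le hcongr,
    circleIntegral.integral_eq_zero_of_hasDerivWithinAt hR.le
      fun ζ hζ => (hG ζ hζ).hasDerivWithinAt, smul_zero]

/-- The kernel whose circle average against `H`, times `b!`, is the Cauchy formula for the `b`-th
derivative of `H` at `z`; the numerator `ζ - c` converts `dζ / (2 * π * I)` into the normalised arc
length of `circleAverage`. -/
noncomputable def cauchyKernel (c z : ℂ) (b : ℕ) (ζ : ℂ) : ℂ :=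
  (ζ - c) / (ζ - z) ^ (b + 1)

theorem sub_ne_zero_of_mem_sphere (hz : z ∈ ball c R) (hζ : ζ ∈ sphere c R) : ζ - z ≠ 0 :=
  sub_ne_zero.2 (by rintro rfl; exact (mem_ball.1 hz).ne hζ)

theorem continuousOn_cauchyKernel (hz : z ∈ ball c R) :
    ContinuousOn (cauchyKernel c z b) (sphere c R) :=
  .div (by fun_prop) (by fun_prop) fun _ hζ =>
    pow_ne_zero _ (sub_ne_zero_of_mem_sphere hz hζ)

theorem circleAverage_cauchyKernel_smul_deriv [CompleteSpace F] {H : ℂ → F} (hz : z ∈ ball c R)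
    (hH : AnalyticOnNhd ℂ H (sphere c R)) :
    circleAverage (fun ζ => cauchyKernel c z b ζ • deriv H ζ) c R =
      (b + 1 : ℂ) • circleAverage (fun ζ => cauchyKernel c z (b + 1) ζ • H ζ) c R := by
  have hR : 0 < R := pos_of_mem_ball hz
  have hne : ∀ ζ ∈ sphere c R, ζ - z ≠ 0 := fun _ => sub_ne_zero_of_mem_sphere hz
  have hprod : ∀ ζ ∈ sphere c R, HasDerivAt (fun ζ => ((ζ - z) ^ (b + 1))⁻¹ • H ζ)
      (((ζ - z) ^ (b + 1))⁻¹ • deriv H ζ - ((b + 1) * ((ζ - z) ^ (b + 2))⁻¹) • H ζ) ζ := by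
    intro ζ hζ
    have hpow := (((hasDerivAt_id ζ).sub_const z).fun_pow (b + 1)).fun_inv
      (pow_ne_zero _ (hne ζ hζ))
    convert! hpow.fun_smul (hH ζ hζ).differentiableAt.hasDerivAt using 1
    rw [sub_eq_add_neg, ← neg_smul]
    congr 2
    have hζz := hne ζ hζ
    simp only [id_eq, Nat.cast_add, Nat.cast_one, add_tsub_cancel_right, mul_one]
    field_simp
    ring
  have hderiv : CircleIntegrable (fun ζ => cauchyKernel c z b ζ • deriv H ζ) c R :=
    ((continuousOn_cauchyKernel hz).smul hH.deriv.continuousOn).circleIntegrable hR.le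
  have hsucc : CircleIntegrable
      (fun ζ => (b + 1 : ℂ) • cauchyKernel c z (b + 1) ζ • H ζ) c R :=
    (((continuousOn_cauchyKernel hz).smul hH.continuousOn).const_smul _).circleIntegrable hR.le
  rw [← sub_eq_zero, ← circleAverage_fun_smul, ← circleAverage_fun_sub hderiv hsucc,
    ← circleAverage_sub_smul_eq_zero_of_hasDerivAt hR hprod]
  simp only [cauchyKernel, smul_sub, smul_smul, div_eq_mul_inv, mul_left_comm, add_assoc,
    one_add_one_eq_two]

theorem iteratedDeriv_eq_circleAverage [CompleteSpace F] {H : ℂ → F} (hz : z ∈ ball c R)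
    (hH : AnalyticOnNhd ℂ H (closedBall c R)) (b : ℕ) :
    iteratedDeriv b H z =
      (b.factorial : ℂ) • circleAverage (fun ζ => cauchyKernel c z b ζ • H ζ) c R := by
  induction b generalizing H with
  | zero =>
    have hdiff : DiffContOnCl ℂ H (ball c |R|) := by
      rw [abs_of_pos (pos_of_mem_ball hz)]
      exact (hH.differentiableOn.mono closure_ball_subset_closedBall).diffContOnCl
    have hmean := hdiff.circleAverage_smul_div (by rwa [abs_of_pos (pos_of_mem_ball hz)])
    simp [cauchyKernel, hmean]
  | succ b ih =>
    rw [iteratedDeriv_succ', ih hH.deriv,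
      circleAverage_cauchyKernel_smul_deriv hz (hH.mono sphere_subset_closedBall), smul_smul,
      Nat.factorial_succ, Nat.cast_mul, Nat.cast_add_one, mul_comm]

-- The right-hand side is holomorphic in `ζ` on the closed ball and, for `b ≠ 0`, vanishes at `c`.
theorem conj_cauchyKernel_of_mem_sphere (hz : z ∈ ball c R) (hζ : ζ ∈ sphere c R) :
    conj (cauchyKernel c z b ζ) =
      R ^ 2 * (ζ - c) ^ b / (R ^ 2 - conj (z - c) * (ζ - c)) ^ (b + 1) := by
  have hc : ζ - c ≠ 0 := sub_ne_zero.2 (ne_of_mem_sphere hζ (pos_of_mem_ball hz).ne')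
  have hR : (R : ℂ) ^ 2 = conj (ζ - c) * (ζ - c) := by
    rw [mul_comm, Complex.mul_conj, Complex.normSq_eq_norm_sq, mem_sphere_iff_norm.1 hζ]
    norm_cast
  have hden : (R : ℂ) ^ 2 - conj (z - c) * (ζ - c) = conj (ζ - z) * (ζ - c) := by
    rw [hR, ← sub_mul, ← map_sub, sub_sub_sub_cancel_right]
  have hne : conj (ζ - z) ≠ 0 := (map_ne_zero _).2 (sub_ne_zero_of_mem_sphere hz hζ)
  rw [hden, hR, cauchyKernel, map_div₀, map_pow, mul_pow]
  field_simp
  ring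

theorem circleAverage_cauchyKernel_smul_conj {K : ℂ → ℂ} (hz : z ∈ ball c R)
    (hK : AnalyticOnNhd ℂ K (closedBall c R)) (hb : b ≠ 0) :
    circleAverage (fun ζ => cauchyKernel c z b ζ • conj (K ζ)) c R = 0 := by
  have hR : 0 < R := pos_of_mem_ball hz
  set G : ℂ → ℂ := fun ζ =>
    R ^ 2 * (ζ - c) ^ b / (R ^ 2 - conj (z - c) * (ζ - c)) ^ (b + 1) * K ζ with hG
  have hden : ∀ ζ ∈ closedBall c R, (R : ℂ) ^ 2 - conj (z - c) * (ζ - c) ≠ 0 := by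
    intro ζ hζ h0
    have hnorm := congrArg norm (sub_eq_zero.1 h0)
    rw [norm_pow, norm_mul, RCLike.norm_conj, Complex.norm_real, norm_of_nonneg hR.le] at hnorm
    nlinarith [mem_ball_iff_norm.1 hz, mem_closedBall_iff_norm.1 hζ, norm_nonneg (z - c)]
  have hdiff : DifferentiableOn ℂ G (closedBall c R) := by
    have hKd := hK.differentiableOn
    fun_prop (disch := exact fun ζ hζ => pow_ne_zero _ (hden ζ hζ))
  have hmean : circleAverage G c R = 0 := by
    have hcl : DiffContOnCl ℂ G (ball c |R|) := by
      rw [abs_of_pos hR]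
      exact (hdiff.mono closure_ball_subset_closedBall).diffContOnCl
    rw [hcl.circleAverage]
    simp [hG, hb]
  have hconj := Complex.conjCLE.toContinuousLinearMap.circleAverage_comp_comm
    ((hdiff.continuousOn.mono sphere_subset_closedBall).circleIntegrable hR.le)
  rw [hmean, map_zero] at hconj
  rw [← hconj]
  refine circleAverage_congr_sphere fun ζ hζ => ?_
  rw [abs_of_pos hR] at hζ
  have hGζ : G ζ = conj (cauchyKernel c z b ζ) * K ζ :=
    congrArg (· * K ζ) (conj_cauchyKernel_of_mem_sphere hz hζ).symm
  change _ = conj (G ζ)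
  rw [hGζ, map_mul, Complex.conj_conj, smul_eq_mul]

theorem norm_cauchyKernel_succ_le_poissonKernel (hz : z ∈ ball c R) (hζ : ζ ∈ sphere c R) :
    ‖cauchyKernel c z (b + 1) ζ‖ ≤
      R / ((R - ‖z - c‖) ^ b * (R ^ 2 - ‖z - c‖ ^ 2)) * poissonKernel c z ζ := by
  have hR := pos_of_mem_ball hz
  have hne := norm_pos_iff.2 (sub_ne_zero_of_mem_sphere hz hζ)
  rw [mem_ball_iff_norm] at hz
  rw [mem_sphere_iff_norm] at hζ
  have hgap : 0 < R - ‖z - c‖ := sub_pos.2 hz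
  have hgap2 : 0 < R ^ 2 - ‖z - c‖ ^ 2 := sub_pos.2 (by gcongr)
  have hdist : R - ‖z - c‖ ≤ ‖ζ - z‖ := by
    rw [← hζ, ← sub_sub_sub_cancel_right ζ z c]; exact norm_sub_norm_le _ _
  calc ‖cauchyKernel c z (b + 1) ζ‖ = R / (‖ζ - z‖ ^ b * ‖ζ - z‖ ^ 2) := by
        rw [cauchyKernel, norm_div, norm_pow, hζ, add_assoc, pow_add]
    _ ≤ R / ((R - ‖z - c‖) ^ b * ‖ζ - z‖ ^ 2) := by gcongr
    _ = _ := by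
        rw [poissonKernel, hζ, sub_sub_sub_cancel_right]
        field_simp

theorem continuousOn_poissonKernel (hz : z ∈ ball c R) :
    ContinuousOn (poissonKernel c z) (sphere c R) := by
  refine .div (by fun_prop) (by fun_prop) fun ζ hζ => ?_
  rw [sub_sub_sub_cancel_right]
  exact pow_ne_zero _ (norm_ne_zero_iff.2 (sub_ne_zero_of_mem_sphere hz hζ))

theorem norm_circleAverage_cauchyKernel_smul_le {Φ : ℂ → F} {Q : ℂ → ℂ} (hz : z ∈ ball c R)
    (hΦ : ContinuousOn Φ (sphere c R)) (hQ : AnalyticOnNhd ℂ Q (closedBall c R))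
    (hΦQ : ∀ ζ ∈ sphere c R, ‖Φ ζ‖ ≤ (Q ζ).re) :
    ‖circleAverage (fun ζ => cauchyKernel c z (b + 1) ζ • Φ ζ) c R‖ ≤
      R / ((R - ‖z - c‖) ^ b * (R ^ 2 - ‖z - c‖ ^ 2)) * (Q z).re := by
  have hR := pos_of_mem_ball hz
  set M := R / ((R - ‖z - c‖) ^ b * (R ^ 2 - ‖z - c‖ ^ 2))
  have hQc : ContinuousOn (fun ζ => (Q ζ).re) (sphere c R) :=
    Complex.continuous_re.comp_continuousOn (hQ.continuousOn.mono sphere_subset_closedBall)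
  have hpoisson : circleAverage (fun ζ => poissonKernel c z ζ • (Q ζ).re) c R = (Q z).re := by
    have hharm : InnerProductSpace.HarmonicOnNhd (fun ζ => (Q ζ).re) (closedBall c R) :=
      fun ζ hζ => (hQ ζ hζ).harmonicAt_re
    exact hharm.circleAverage_poissonKernel_smul hz
  calc ‖circleAverage (fun ζ => cauchyKernel c z (b + 1) ζ • Φ ζ) c R‖
      ≤ circleAverage (fun ζ => ‖cauchyKernel c z (b + 1) ζ • Φ ζ‖) c R :=
        norm_circleAverage_le_circleAverage_norm _
    _ ≤ circleAverage (fun ζ => M • (poissonKernel c z ζ • (Q ζ).re)) c R := by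
        have hPQ := (continuousOn_poissonKernel hz).smul hQc
        refine circleAverage_mono
          (((continuousOn_cauchyKernel hz).smul hΦ).norm.circleIntegrable hR.le)
          ((hPQ.const_smul M).circleIntegrable hR.le) fun ζ hζ => ?_
        rw [abs_of_pos hR] at hζ
        have hkernel := norm_cauchyKernel_succ_le_poissonKernel (b := b) hz hζ
        rw [norm_smul, smul_smul]
        exact mul_le_mul hkernel (hΦQ ζ hζ) (norm_nonneg _) ((norm_nonneg _).trans hkernel)
    _ = M * (Q z).re := by rw [circleAverage_fun_smul, hpoisson, smul_eq_mul]

theorem norm_iteratedDeriv_succ_le_of_analyticOnNhd {H K Q : ℂ → ℂ} (hz : z ∈ ball c R)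
    (hH : AnalyticOnNhd ℂ H (closedBall c R)) (hK : AnalyticOnNhd ℂ K (closedBall c R))
    (hQ : AnalyticOnNhd ℂ Q (closedBall c R))
    (hle : ∀ ζ ∈ sphere c R, ‖H ζ + conj (K ζ)‖ ≤ (Q ζ).re) (b : ℕ) :
    ‖iteratedDeriv (b + 1) H z‖ ≤ (b + 1).factorial *
      (R / ((R - ‖z - c‖) ^ b * (R ^ 2 - ‖z - c‖ ^ 2)) * (Q z).re) := by
  have hR := pos_of_mem_ball hz
  have hHc := hH.continuousOn.mono sphere_subset_closedBall
  have hKc : ContinuousOn (fun ζ => conj (K ζ)) (sphere c R) :=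
    Complex.continuous_conj.comp_continuousOn (hK.continuousOn.mono sphere_subset_closedBall)
  have hHint : CircleIntegrable (fun ζ => cauchyKernel c z (b + 1) ζ • H ζ) c R :=
    ((continuousOn_cauchyKernel hz).smul hHc).circleIntegrable hR.le
  have hKint : CircleIntegrable (fun ζ => cauchyKernel c z (b + 1) ζ • conj (K ζ)) c R :=
    ((continuousOn_cauchyKernel hz).smul hKc).circleIntegrable hR.le
  have hdrop : circleAverage (fun ζ => cauchyKernel c z (b + 1) ζ • (H ζ + conj (K ζ))) c R =
      circleAverage (fun ζ => cauchyKernel c z (b + 1) ζ • H ζ) c R := by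
    simp_rw [smul_add]
    rw [circleAverage_fun_add hHint hKint,
      circleAverage_cauchyKernel_smul_conj hz hK b.succ_ne_zero, add_zero]
  rw [iteratedDeriv_eq_circleAverage hz hH, ← hdrop, norm_smul, Complex.norm_natCast]
  gcongr
  exact norm_circleAverage_cauchyKernel_smul_le hz (hHc.add hKc) hQ hle

theorem norm_iteratedDeriv_succ_le_of_differentiableOn {H K Q : ℂ → ℂ} (hz : z ∈ ball c R)
    (hH : DifferentiableOn ℂ H (ball c R)) (hK : DifferentiableOn ℂ K (ball c R))
    (hQ : DifferentiableOn ℂ Q (ball c R))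
    (hle : ∀ ζ ∈ ball c R, ‖H ζ + conj (K ζ)‖ ≤ (Q ζ).re) (b : ℕ) :
    ‖iteratedDeriv (b + 1) H z‖ ≤ (b + 1).factorial *
      (R / ((R - ‖z - c‖) ^ b * (R ^ 2 - ‖z - c‖ ^ 2)) * (Q z).re) := by
  have hzR : ‖z - c‖ < R := mem_ball_iff_norm.1 hz
  have hden : (R - ‖z - c‖) ^ b * (R ^ 2 - ‖z - c‖ ^ 2) ≠ 0 :=
    mul_ne_zero (pow_ne_zero _ (sub_pos.2 hzR).ne') (sub_pos.2 (by gcongr)).ne'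
  have hcont : ContinuousAt (fun r : ℝ => (b + 1).factorial *
      (r / ((r - ‖z - c‖) ^ b * (r ^ 2 - ‖z - c‖ ^ 2)) * (Q z).re)) R := by
    fun_prop (disch := exact hden)
  refine ge_of_tendsto (hcont.tendsto.mono_left (nhdsWithin_le_nhds (s := Set.Iio R))) ?_
  filter_upwards [Ioo_mem_nhdsLT hzR] with r hr
  have hsub : closedBall c r ⊆ ball c R := closedBall_subset_ball hr.2
  exact norm_iteratedDeriv_succ_le_of_analyticOnNhd (mem_ball_iff_norm.2 hr.1)
    ((hH.analyticOnNhd isOpen_ball).mono hsub) ((hK.analyticOnNhd isOpen_ball).mono hsub)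
    ((hQ.analyticOnNhd isOpen_ball).mono hsub)
    (fun ζ hζ => hle ζ (hsub (sphere_subset_closedBall hζ))) b

end CauchyKernel

section SchwarzPickFactor

open Metric ComplexConjugate

/-- The factor `(1 + r)^(b - 1) / (1 - r²)^b` contributed to the Schwarz–Pick estimate by `b`
derivatives at distance `r` from the centre of the unit disc. The truncated subtraction makes it
`1` for `b = 0`. -/
noncomputable def schwarzPickFactor (b : ℕ) (r : ℝ) : ℝ :=
  (1 + r) ^ (b - 1) / (1 - r ^ 2) ^ b

theorem schwarzPickFactor_zero (r : ℝ) : schwarzPickFactor 0 r = 1 := by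
  simp [schwarzPickFactor]

theorem schwarzPickFactor_succ (b : ℕ) {r : ℝ} (hr : 1 + r ≠ 0) :
    schwarzPickFactor (b + 1) r = 1 / ((1 - r) ^ b * (1 - r ^ 2)) := by
  have hden : (1 - r ^ 2) ^ (b + 1) = (1 + r) ^ b * ((1 - r) ^ b * (1 - r ^ 2)) := by
    rw [← mul_assoc, ← mul_pow]; ring
  rw [schwarzPickFactor, hden, Nat.add_sub_cancel, div_mul_cancel_left₀ (pow_ne_zero b hr),
    one_div]

theorem schwarzPickFactor_nonneg (b : ℕ) {r : ℝ} (hr : 0 ≤ r) (hr1 : r < 1) :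
    0 ≤ schwarzPickFactor b r :=
  div_nonneg (by positivity) (pow_nonneg (sub_nonneg.2 (pow_le_one₀ hr hr1.le)) b)

theorem schwarzPickFactor_le_schwarzPickFactor (b : ℕ) {r s : ℝ} (hr : 0 ≤ r) (hrs : r ≤ s)
    (hs : s < 1) : schwarzPickFactor b r ≤ schwarzPickFactor b s := by
  have hs0 : 0 ≤ s := hr.trans hrs
  have hden : 0 < 1 - s ^ 2 := sub_pos.2 (pow_lt_one₀ hs0 hs two_ne_zero)
  unfold schwarzPickFactor
  gcongr

theorem sum_sub_card_filter_ne_zero {ι : Type*} (s : Finset ι) (m : ι → ℕ) :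
    ∑ i ∈ s, m i - (s.filter fun i => m i ≠ 0).card = ∑ i ∈ s, (m i - 1) := by
  rw [Finset.card_filter, ← Finset.sum_tsub_distrib]
  · refine Finset.sum_congr rfl fun i _ => ?_
    split_ifs <;> lia
  · intro i _
    split_ifs <;> lia

theorem prod_schwarzPickFactor_le {ι : Type*} (s : Finset ι) (m : ι → ℕ) {r : ι → ℝ} {t : ℝ}
    (hr : ∀ i ∈ s, 0 ≤ r i) (hrt : ∀ i ∈ s, r i ≤ t) (ht : t < 1) :
    ∏ i ∈ s, schwarzPickFactor (m i) (r i) ≤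
      (1 + t) ^ (∑ i ∈ s, m i - (s.filter fun i => m i ≠ 0).card) /
        (1 - t ^ 2) ^ ∑ i ∈ s, m i := by
  calc ∏ i ∈ s, schwarzPickFactor (m i) (r i) ≤ ∏ i ∈ s, schwarzPickFactor (m i) t :=
        Finset.prod_le_prod
          (fun i hi => schwarzPickFactor_nonneg _ (hr i hi) ((hrt i hi).trans_lt ht))
          fun i hi => schwarzPickFactor_le_schwarzPickFactor _ (hr i hi) (hrt i hi) ht
    _ = _ := by
        simp only [schwarzPickFactor, Finset.prod_div_distrib, Finset.prod_pow_eq_pow_sum,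
          sum_sub_card_filter_ne_zero]

theorem norm_iteratedDeriv_le_schwarzPickFactor {H K Q : ℂ → ℂ} {z : ℂ} (hz : z ∈ ball 0 1)
    (hH : DifferentiableOn ℂ H (ball 0 1)) (hK : DifferentiableOn ℂ K (ball 0 1))
    (hQ : DifferentiableOn ℂ Q (ball 0 1))
    (hle : ∀ ζ ∈ ball 0 1, ‖H ζ + conj (K ζ)‖ ≤ (Q ζ).re) {b : ℕ} (hb : b ≠ 0) :
    ‖iteratedDeriv b H z‖ ≤ b.factorial * schwarzPickFactor b ‖z‖ * (Q z).re := by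
  obtain ⟨b, rfl⟩ := Nat.exists_eq_succ_of_ne_zero hb
  have hbound := norm_iteratedDeriv_succ_le_of_differentiableOn hz hH hK hQ hle b
  rwa [sub_zero, one_pow, ← mul_assoc, ← schwarzPickFactor_succ b (by positivity)] at hbound

end SchwarzPickFactor

section WirtingerDerivative

open Filter Topology

variable {n : ℕ} {k : Fin n} {U : Set (Fin n → ℂ)} {w : Fin n → ℂ} {F G H : (Fin n → ℂ) → ℂ}

theorem differentiableOn_wpd (k : Fin n) (hU : IsOpen U) (hH : DifferentiableOn ℂ H U) :
    DifferentiableOn ℂ (wpd k H) U := fun _ hw =>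
  (differentiableAt_fderiv_apply (hH.eventually_differentiableAt (hU.mem_nhds hw))
    _).differentiableWithinAt

theorem differentiableOn_iterate_wpd (k : Fin n) (a : ℕ) (hU : IsOpen U)
    (hH : DifferentiableOn ℂ H U) : DifferentiableOn ℂ ((wpd k)^[a] H) U := by
  induction a generalizing H with
  | zero => exact hH
  | succ _ ih => exact ih (differentiableOn_wpd k hU hH)

theorem deriv_comp_update {t : ℂ} (hH : DifferentiableAt ℂ H (Function.update w k t)) :
    deriv (fun s => H (Function.update w k s)) t = wpd k H (Function.update w k t) :=
  (hH.hasFDerivAt.comp_hasDerivAt t (hasDerivAt_update w k t)).deriv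

theorem iterate_wpd_eq_iteratedDeriv (k : Fin n) (a : ℕ) (hU : IsOpen U)
    (hH : DifferentiableOn ℂ H U) (hw : w ∈ U) :
    (wpd k)^[a] H w = iteratedDeriv a (fun s => H (Function.update w k s)) (w k) := by
  induction a generalizing H with
  | zero => simp
  | succ a ih =>
    have hnear : ∀ᶠ s in 𝓝 (w k), Function.update w k s ∈ U :=
      (continuous_const.update k continuous_id).continuousAt.eventually_mem
        (hU.mem_nhds (by simpa using hw))
    rw [Function.iterate_succ_apply, ih (differentiableOn_wpd k hU hH), iteratedDeriv_succ']
    refine EventuallyEq.iteratedDeriv_eq a ?_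
    filter_upwards [hnear] with s hs
    exact (deriv_comp_update (hH.differentiableAt (hU.mem_nhds hs))).symm

theorem eqOn_wpd_add (k : Fin n) (hU : IsOpen U) (hH : DifferentiableOn ℂ H U)
    (hG : DifferentiableOn ℂ G U) (hF : U.EqOn F (H + G)) :
    U.EqOn (wpd k F) (wpd k H + wpd k G) := fun w hw => by
  have hmem := hU.mem_nhds hw
  simp only [wpd, Pi.add_apply, (hF.eventuallyEq_of_mem hmem).fderiv_eq,
    fderiv_add (hH.differentiableAt hmem) (hG.differentiableAt hmem),
    add_apply]

theorem eqOn_iterate_wpd_add (k : Fin n) (a : ℕ) (hU : IsOpen U) (hH : DifferentiableOn ℂ H U)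
    (hG : DifferentiableOn ℂ G U) (hF : U.EqOn F (H + G)) :
    U.EqOn ((wpd k)^[a] F) ((wpd k)^[a] H + (wpd k)^[a] G) := by
  induction a generalizing F G H with
  | zero => exact hF
  | succ _ ih =>
    exact ih (differentiableOn_wpd k hU hH) (differentiableOn_wpd k hU hG)
      (eqOn_wpd_add k hU hH hG hF)

/-- The part of the iterated Wirtinger derivative `∂^{|m|}/∂z^m` in the coordinates listed in `l`,
which lets `wpdMulti` be treated one coordinate at a time. -/
noncomputable def wpdList (m : Fin n → ℕ) (l : List (Fin n)) (h : (Fin n → ℂ) → ℂ) :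
    (Fin n → ℂ) → ℂ :=
  l.foldr (fun k F => (wpd k)^[m k] F) h

theorem wpdList_cons (m : Fin n → ℕ) (k : Fin n) (l : List (Fin n)) (h : (Fin n → ℂ) → ℂ) :
    wpdList m (k :: l) h = (wpd k)^[m k] (wpdList m l h) :=
  rfl

theorem wpdMulti_eq_wpdList (m : Fin n → ℕ) (h : (Fin n → ℂ) → ℂ) :
    wpdMulti m h = wpdList m (List.finRange n) h :=
  Fin.foldr_eq_foldr_finRange ..

theorem differentiableOn_wpdList (m : Fin n → ℕ) (l : List (Fin n)) (hU : IsOpen U)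
    (hH : DifferentiableOn ℂ H U) : DifferentiableOn ℂ (wpdList m l H) U := by
  induction l with
  | nil => exact hH
  | cons k l ih => exact differentiableOn_iterate_wpd k (m k) hU ih

theorem eqOn_wpdList_add (m : Fin n → ℕ) (l : List (Fin n)) (hU : IsOpen U)
    (hH : DifferentiableOn ℂ H U) (hG : DifferentiableOn ℂ G U) :
    U.EqOn (wpdList m l (H + G)) (wpdList m l H + wpdList m l G) := by
  induction l with
  | nil => exact fun _ _ => rfl
  | cons k l ih =>
    exact eqOn_iterate_wpd_add k (m k) hU (differentiableOn_wpdList m l hU hH)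
      (differentiableOn_wpdList m l hU hG) ih

theorem wpdList_eq_self {m : Fin n → ℕ} {l : List (Fin n)} (hm : ∀ k ∈ l, m k = 0)
    (h : (Fin n → ℂ) → ℂ) : wpdList m l h = h := by
  induction l with
  | nil => rfl
  | cons k l ih =>
    rw [List.forall_mem_cons] at hm
    rw [wpdList_cons, hm.1, ih hm.2, Function.iterate_zero, id]

end WirtingerDerivative

section Polydisc

open Metric ComplexConjugate

variable {n : ℕ} {k : Fin n} {m : Fin n → ℕ} {l : List (Fin n)} {w : Fin n → ℂ}
  {F H K Q : (Fin n → ℂ) → ℂ}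

theorem update_mem_ball_zero_one {s : ℂ} (hw : w ∈ ball 0 1) (hs : s ∈ ball 0 1) :
    Function.update w k s ∈ ball 0 1 := by
  rw [mem_ball_zero_iff, pi_norm_lt_iff one_pos] at hw ⊢
  refine (Function.forall_update_iff w fun _ t => ‖t‖ < 1).2 ⟨?_, fun j _ => hw j⟩
  exact mem_ball_zero_iff.1 hs

theorem differentiableOn_comp_update (hH : DifferentiableOn ℂ H (ball 0 1)) (hw : w ∈ ball 0 1) :
    DifferentiableOn ℂ (fun s => H (Function.update w k s)) (ball 0 1) :=
  hH.comp (fun s _ => (hasDerivAt_update w k s).differentiableAt.differentiableWithinAt)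
    fun _ hs => update_mem_ball_zero_one hw hs

theorem norm_iterate_wpd_le (hH : DifferentiableOn ℂ H (ball 0 1))
    (hK : DifferentiableOn ℂ K (ball 0 1)) (hQ : DifferentiableOn ℂ Q (ball 0 1))
    (hw : w ∈ ball 0 1)
    (hle : ∀ s ∈ ball 0 1, ‖H (Function.update w k s) + conj (K (Function.update w k s))‖ ≤
      (Q (Function.update w k s)).re) {b : ℕ} (hb : b ≠ 0) :
    ‖(wpd k)^[b] H w‖ ≤ b.factorial * schwarzPickFactor b ‖w k‖ * (Q w).re := by
  have hwk : w k ∈ ball 0 1 :=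
    mem_ball_zero_iff.2 ((norm_le_pi_norm w k).trans_lt (mem_ball_zero_iff.1 hw))
  rw [iterate_wpd_eq_iteratedDeriv k b isOpen_ball hH hw]
  simpa using norm_iteratedDeriv_le_schwarzPickFactor hwk (differentiableOn_comp_update hH hw)
    (differentiableOn_comp_update hK hw) (differentiableOn_comp_update hQ hw) hle hb

/-- The factor by which differentiating `m k` times in each coordinate `k` listed in `l` multiplies
a majorant at `w`. -/
noncomputable def schwarzPickProd (m : Fin n → ℕ) (l : List (Fin n)) (w : Fin n → ℂ) : ℝ :=
  (l.map fun k => (m k).factorial * schwarzPickFactor (m k) ‖w k‖).prod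

theorem schwarzPickProd_cons : schwarzPickProd m (k :: l) w =
    (m k).factorial * schwarzPickFactor (m k) ‖w k‖ * schwarzPickProd m l w :=
  List.prod_cons

theorem schwarzPickProd_eq_one (hm : ∀ k ∈ l, m k = 0) : schwarzPickProd m l w = 1 := by
  refine List.prod_eq_one (List.forall_mem_map.2 fun k hk => ?_)
  rw [hm k hk, schwarzPickFactor_zero, Nat.factorial_zero, Nat.cast_one, mul_one]

theorem schwarzPickProd_update (hk : k ∉ l) (s : ℂ) :
    schwarzPickProd m l (Function.update w k s) = schwarzPickProd m l w := by
  refine congrArg List.prod (List.map_congr_left fun j hj => ?_)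
  rw [Function.update_of_ne (ne_of_mem_of_not_mem hj hk)]

theorem norm_wpdList_le (hH : DifferentiableOn ℂ H (ball 0 1))
    (hK : DifferentiableOn ℂ K (ball 0 1)) (hQ : DifferentiableOn ℂ Q (ball 0 1))
    (hle : ∀ w ∈ ball 0 1, ‖H w + conj (K w)‖ ≤ (Q w).re) (hl : l.Nodup)
    (hm : ∃ k ∈ l, m k ≠ 0) (hw : w ∈ ball 0 1) :
    ‖wpdList m l H w‖ ≤ schwarzPickProd m l w * (Q w).re := by
  induction l generalizing w with
  | nil => simp at hm
  | cons k l ih =>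
    obtain ⟨hkl, hl⟩ := List.nodup_cons.1 hl
    rw [wpdList_cons, schwarzPickProd_cons]
    by_cases htail : ∃ j ∈ l, m j ≠ 0
    · rcases eq_or_ne (m k) 0 with hk | hk
      · simpa [hk, schwarzPickFactor_zero] using ih hl htail hw
      · have hslice : ∀ s ∈ ball 0 1, ‖wpdList m l H (Function.update w k s) + conj 0‖ ≤
            (schwarzPickProd m l w * Q (Function.update w k s)).re := fun s hs => by
          rw [map_zero, add_zero, Complex.re_ofReal_mul, ← schwarzPickProd_update hkl s]
          exact ih hl htail (update_mem_ball_zero_one hw hs)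
        have hbound := norm_iterate_wpd_le (K := fun _ => 0)
          (Q := fun w' => schwarzPickProd m l w * Q w')
          (differentiableOn_wpdList m l isOpen_ball hH) (differentiableOn_const 0)
          (hQ.const_mul _) hw hslice hk
        rwa [Complex.re_ofReal_mul, ← mul_assoc] at hbound
    · push Not at htail
      have hk : m k ≠ 0 := by
        obtain ⟨j, hj, hmj⟩ := hm
        rcases List.mem_cons.1 hj with rfl | hj
        · exact hmj
        · exact absurd (htail j hj) hmj
      rw [wpdList_eq_self htail, schwarzPickProd_eq_one htail, mul_one]
      exact norm_iterate_wpd_le hH hK hQ hw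
        (fun s hs => hle _ (update_mem_ball_zero_one hw hs)) hk

theorem norm_wpdMulti_le_of_re_le_one (hF : DifferentiableOn ℂ F (ball 0 1))
    (hre : ∀ w ∈ ball 0 1, (F w).re ≤ 1) (hm : m ≠ 0) (hw : w ∈ ball 0 1) :
    ‖wpdMulti m F w‖ ≤
      (∏ k, ((m k).factorial * schwarzPickFactor (m k) ‖w k‖)) * (2 * (1 - (F w).re)) := by
  have hreQ : ∀ w, (2 * (1 - F w)).re = 2 * (1 - (F w).re) := fun w => by simp
  -- Subtracting the constant `2` from `F + conj F` makes it `-2 Re (1 - F)`, whose norm has a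
  -- holomorphic majorant.
  have hnorm : ∀ w ∈ ball 0 1, ‖F w + conj (F w - 2)‖ ≤ (2 * (1 - F w)).re := fun w hw => by
    have hreal : F w + conj (F w - 2) = ((2 * (F w).re - 2 : ℝ) : ℂ) := by
      rw [map_sub, ← add_sub_assoc, Complex.add_conj, map_ofNat]
      norm_cast
    rw [hreal, hreQ, Complex.norm_real, Real.norm_of_nonpos] <;> linarith [hre w hw]
  obtain ⟨k, hk⟩ := Function.ne_iff.1 hm
  have hbound := norm_wpdList_le hF (hF.sub_const 2) ((hF.const_sub 1).const_mul 2) hnorm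
    (List.nodup_finRange n) ⟨k, List.mem_finRange k, hk⟩ hw
  rwa [← wpdMulti_eq_wpdList, schwarzPickProd, ← Fin.prod_univ_def, hreQ] at hbound

end Polydisc

theorem stmt11 (n : ℕ) (hn : 1 ≤ n)
    (f h g : (Fin n → ℂ) → ℂ)
    (hh : DifferentiableOn ℂ h (Metric.ball 0 1))
    (hg : DifferentiableOn ℂ g (Metric.ball 0 1))
    (hg0 : g 0 = 0)
    (hfd : ∀ z ∈ Metric.ball (0 : Fin n → ℂ) 1, f z = h z + (starRingEnd ℂ) (g z))
    (hre : ∀ z ∈ Metric.ball (0 : Fin n → ℂ) 1, (f z).re ≤ 1)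
    (z : Fin n → ℂ) (hz : z ∈ Metric.ball (0 : Fin n → ℂ) 1)
    (m : Fin n → ℕ) (hm : m ≠ 0) :
    -- `∂^{|m|} f/∂z^m = D^m h` and `conj (∂^{|m|} f/∂z̄^m) = D^m g`
    ‖wpdMulti m h z + wpdMulti m g z‖ ≤
      2 * (∏ j, ((m j).factorial : ℝ)) * (1 - (f z).re) *
        (1 + ‖z‖) ^ ((∑ j, m j) - (Finset.univ.filter fun j => m j ≠ 0).card) /
        (1 - ‖z‖ ^ 2) ^ (∑ j, m j) := by
  have hreF : ∀ w ∈ Metric.ball (0 : Fin n → ℂ) 1, ((h + g) w).re = (f w).re := fun w hw => by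
    rw [hfd w hw, Pi.add_apply, Complex.add_re, Complex.add_re, Complex.conj_re]
  have hadd : wpdMulti m h z + wpdMulti m g z = wpdMulti m (h + g) z := by
    simp only [wpdMulti_eq_wpdList]
    exact (eqOn_wpdList_add m _ Metric.isOpen_ball hh hg hz).symm
  have hbound := norm_wpdMulti_le_of_re_le_one (hh.add hg)
    (fun w hw => (hreF w hw).trans_le (hre w hw)) hm hz
  have hprod := prod_schwarzPickFactor_le Finset.univ m (fun j _ => norm_nonneg (z j))
    (fun j _ => norm_le_pi_norm z j) (mem_ball_zero_iff.1 hz)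
  have hgap : 0 ≤ 1 - (f z).re := sub_nonneg.2 (hre z hz)
  rw [hreF z hz, Finset.prod_mul_distrib] at hbound
  rw [hadd, mul_div_assoc]
  calc ‖wpdMulti m (h + g) z‖
      ≤ (∏ j, ((m j).factorial : ℝ)) * (∏ j, schwarzPickFactor (m j) ‖z j‖) *
        (2 * (1 - (f z).re)) := hbound
    _ ≤ _ := by grw [hprod]
    _ = _ := by ring
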